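/- Adversarial update cost-budget bound (Theorem 4.2, cost part): in a finite discounted MDP, let δ > 0, ε_C ≥ 0, d ∈ ℝ, n1 ≥ 1, and let C : S → A → ℝ be a cost signal. Suppose a max-reward stage σ_0, …, σ_{n1} satisfies for every i < n1: (σ_i s a = 0 → σ_{i+1} s a = 0), D̄_KL(σ_{i+1}‖σ_i) ≤ δ, the cost surrogate constraint J_C(σ_i) + (1/(1−γ)) · 𝔸_C(σ_i, σ_{i+1}) ≤ d holds, and ε_C(σ_i, σ_{i+1}) ≤ ε_C; and a subsequent min-cost stage π_0 = σ_{n1}, π_1, …, π_{n2} satisfies for every i < n2: (π_i s a = 0 → π_{i+1} s a = 0), D̄_KL(π_{i+1}‖π_i) ≤ δ, 𝔸_C(π_i, π_{i+1}) ≤ 0, and ε_C(π_i, π_{i+1}) ≤ ε_C. Then J_C(π_{n2}) − d ≤ (√(2δ) · γ / (1−γ)²) · (n1 + n2) · ε_C. -/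

import Mathlib

open Real BigOperators

/-- Induced transition matrix of policy `pol`: `P_pol(s,s') = ∑ a, pol s a * P s a s'`. -/
noncomputable def transMat {S A : Type*} [Fintype A] (P : S → A → S → ℝ)
    (pol : S → A → ℝ) : Matrix S S ℝ :=
  fun s s' => ∑ a, pol s a * P s a s'

/-- Discounted state visitation distribution
`d_pol(s) = (1-γ) ∑ₜ γ^t ∑_{s0} ρ0 s0 * (P_pol^t)(s0,s)`. -/
noncomputable def dVisit {S A : Type*} [Fintype S] [DecidableEq S] [Fintype A]
    (P : S → A → S → ℝ) (γ : ℝ) (ρ0 : S → ℝ) (pol : S → A → ℝ) (s : S) : ℝ :=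
  (1 - γ) * ∑' t : ℕ, γ ^ t * ∑ s0, ρ0 s0 * (transMat P pol ^ t) s0 s

/-- Value function of signal `F` under policy `pol`. -/
noncomputable def Vfun {S A : Type*} [Fintype S] [DecidableEq S] [Fintype A]
    (P : S → A → S → ℝ) (γ : ℝ) (F : S → A → ℝ) (pol : S → A → ℝ) (s : S) : ℝ :=
  ∑' t : ℕ, γ ^ t * ∑ s', (transMat P pol ^ t) s s' * ∑ a, pol s' a * F s' a

/-- Return `J_F(pol) = ∑ s, ρ0 s * V_F^pol(s)`. -/
noncomputable def Jret {S A : Type*} [Fintype S] [DecidableEq S] [Fintype A]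
    (P : S → A → S → ℝ) (γ : ℝ) (ρ0 : S → ℝ) (F : S → A → ℝ) (pol : S → A → ℝ) : ℝ :=
  ∑ s, ρ0 s * Vfun P γ F pol s

/-- Action-value function `Q_F^pol(s,a) = F s a + γ ∑_{s'} P s a s' * V_F^pol(s')`. -/
noncomputable def Qfun {S A : Type*} [Fintype S] [DecidableEq S] [Fintype A]
    (P : S → A → S → ℝ) (γ : ℝ) (F : S → A → ℝ) (pol : S → A → ℝ) (s : S) (a : A) : ℝ :=
  F s a + γ * ∑ s', P s a s' * Vfun P γ F pol s'

/-- Advantage function `A_F^pol(s,a) = Q_F^pol(s,a) - V_F^pol(s)`. -/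
noncomputable def Adv {S A : Type*} [Fintype S] [DecidableEq S] [Fintype A]
    (P : S → A → S → ℝ) (γ : ℝ) (F : S → A → ℝ) (pol : S → A → ℝ) (s : S) (a : A) : ℝ :=
  Qfun P γ F pol s a - Vfun P γ F pol s

/-- Expected surrogate advantage
`𝔸_F(pol,pol') = ∑ s, d_pol(s) ∑ a, pol' s a * A_F^pol(s,a)`. -/
noncomputable def surrAdv {S A : Type*} [Fintype S] [DecidableEq S] [Fintype A]
    (P : S → A → S → ℝ) (γ : ℝ) (ρ0 : S → ℝ) (F : S → A → ℝ)
    (pol pol' : S → A → ℝ) : ℝ :=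
  ∑ s, dVisit P γ ρ0 pol s * ∑ a, pol' s a * Adv P γ F pol s a

/-- `ε_F(pol,pol') = max_s |∑ a, pol' s a * A_F^pol(s,a)|`. -/
noncomputable def epsAdv {S A : Type*} [Fintype S] [DecidableEq S] [Fintype A] [Nonempty S]
    (P : S → A → S → ℝ) (γ : ℝ) (F : S → A → ℝ) (pol pol' : S → A → ℝ) : ℝ :=
  Finset.univ.sup' Finset.univ_nonempty fun s => |∑ a, pol' s a * Adv P γ F pol s a|

/-- Per-state KL divergence `KL(pol'‖pol)(s) = ∑ a, pol' s a * log (pol' s a / pol s a)`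
(with the convention `0 * log 0 = 0`, automatic since `Real.log 0 = 0`). -/
noncomputable def klState {S A : Type*} [Fintype A] (pol' pol : S → A → ℝ) (s : S) : ℝ :=
  ∑ a, pol' s a * Real.log (pol' s a / pol s a)

/-- Averaged KL divergence `D̄_KL(pol'‖pol) = ∑ s, d_pol(s) * KL(pol'‖pol)(s)`. -/
noncomputable def avgKL {S A : Type*} [Fintype S] [DecidableEq S] [Fintype A]
    (P : S → A → S → ℝ) (γ : ℝ) (ρ0 : S → ℝ) (pol' pol : S → A → ℝ) : ℝ :=
  ∑ s, dVisit P γ ρ0 pol s * klState pol' pol s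



lemma kfun_deriv (x : ℝ) (hx : 0 < x) :
    HasDerivAt (fun x : ℝ => Real.log x - 1 + 1 / x - 3 * (x - 1) ^ 2 / (2 * (x * (x + 2))))
      ((x - 1) ^ 3 / (x ^ 2 * (x + 2) ^ 2)) x := by
  have h1 := Real.hasDerivAt_log hx.ne'
  have h2 := (hasDerivAt_const x (1:ℝ)).div (hasDerivAt_id x) hx.ne'
  have hd : (2 * (x * (x + 2))) ≠ 0 := by positivity
  have h3 := (((hasDerivAt_id x).sub_const 1).pow 2).const_mul 3
  have h4 := (((hasDerivAt_id x).mul ((hasDerivAt_id x).add_const 2))).const_mul 2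
  have h5 := h3.div h4 hd
  have h6 := ((h1.sub_const 1).add h2).sub h5
  refine h6.congr_deriv ?_
  have : x + 2 ≠ 0 := by positivity
  simp only [id, Pi.mul_apply, Pi.pow_apply]
  field_simp
  simp
  ring

lemma kfun_nonneg (x : ℝ) (hx : 0 < x) :
    0 ≤ Real.log x - 1 + 1 / x - 3 * (x - 1) ^ 2 / (2 * (x * (x + 2))) := by
  set k : ℝ → ℝ := fun x : ℝ => Real.log x - 1 + 1 / x - 3 * (x - 1) ^ 2 / (2 * (x * (x + 2)))
    with hk
  have k1 : k 1 = 0 := by simp [hk]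
  change 0 ≤ k x
  rw [← k1]
  rcases le_total x 1 with h | h
  · have hA : AntitoneOn k (Set.Icc x 1) := by
      apply antitoneOn_of_deriv_nonpos (convex_Icc _ _)
      · intro y hy
        exact (kfun_deriv y (lt_of_lt_of_le hx hy.1)).continuousAt.continuousWithinAt
      · intro y hy
        rw [interior_Icc] at hy
        exact (kfun_deriv y (lt_trans hx hy.1)).differentiableAt.differentiableWithinAt
      · intro y hy
        rw [interior_Icc] at hy
        rw [(kfun_deriv y (lt_trans hx hy.1)).deriv]
        apply div_nonpos_of_nonpos_of_nonneg _ (by positivity)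
        have : y - 1 ≤ 0 := by linarith [hy.2]
        nlinarith [sq_nonneg (y - 1), mul_nonneg (sq_nonneg (y - 1)) (neg_nonneg.2 this)]
    exact hA ⟨le_rfl, h⟩ ⟨h, le_rfl⟩ h
  · have hA : MonotoneOn k (Set.Icc 1 x) := by
      apply monotoneOn_of_deriv_nonneg (convex_Icc _ _)
      · intro y hy
        exact (kfun_deriv y (lt_of_lt_of_le one_pos hy.1)).continuousAt.continuousWithinAt
      · intro y hy
        rw [interior_Icc] at hy
        exact (kfun_deriv y (lt_trans one_pos hy.1)).differentiableAt.differentiableWithinAt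
      · intro y hy
        rw [interior_Icc] at hy
        rw [(kfun_deriv y (lt_trans one_pos hy.1)).deriv]
        have : 0 ≤ y - 1 := by linarith [hy.1]
        positivity
    exact hA ⟨le_rfl, h⟩ ⟨h, le_rfl⟩ h

lemma scalar_pinsker (p q : ℝ) (hp : 0 ≤ p) (hq : 0 ≤ q) (h : p = 0 → q = 0) :
    (q - p) ^ 2 ≤ (2 * (q * Real.log (q / p) - q + p)) * ((q + 2 * p) / 3) := by
  rcases hp.eq_or_lt with h0 | hp
  · subst h0; simp [h rfl]
  rcases hq.eq_or_lt with h0 | hq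
  · subst h0; simp; nlinarith
  have := kfun_nonneg (q / p) (by positivity)
  have e : (2 * (q * Real.log (q / p) - q + p)) * ((q + 2 * p) / 3) - (q - p) ^ 2
    = (Real.log (q / p) - 1 + 1 / (q / p) -
      3 * (q / p - 1) ^ 2 / (2 * (q / p * (q / p + 2)))) * (2 * q * ((q + 2 * p) / 3)) := by
    field_simp
  have : 0 ≤ (Real.log (q / p) - 1 + 1 / (q / p) -
      3 * (q / p - 1) ^ 2 / (2 * (q / p * (q / p + 2)))) * (2 * q * ((q + 2 * p) / 3)) := by
    positivity
  linarith

lemma scalar_kl_nonneg (p q : ℝ) (hp : 0 ≤ p) (hq : 0 ≤ q) (h : p = 0 → q = 0) :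
    0 ≤ q * Real.log (q / p) - q + p := by
  rcases hp.eq_or_lt with h0 | hp
  · subst h0; simp [h rfl]
  have h1 := scalar_pinsker p q hp.le hq h
  by_contra hc
  push Not at hc
  have : 0 < (q + 2 * p) / 3 := by positivity
  nlinarith [sq_nonneg (q - p), mul_pos (neg_pos.2 hc) this]

section
variable {S A : Type*} [Fintype A]

lemma kl_nonneg' (p q : S → A → ℝ) (s : S) (hp : ∀ a, 0 ≤ p s a) (hq : ∀ a, 0 ≤ q s a)
    (hp1 : ∑ a, p s a = 1) (hq1 : ∑ a, q s a = 1) (h : ∀ a, p s a = 0 → q s a = 0) :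
    0 ≤ klState q p s := by
  have : klState q p s = ∑ a, (q s a * Real.log (q s a / p s a) - q s a + p s a) := by
    rw [Finset.sum_add_distrib, Finset.sum_sub_distrib, hp1, hq1, klState]; ring
  rw [this]
  exact Finset.sum_nonneg fun a _ => scalar_kl_nonneg _ _ (hp a) (hq a) (h a)

lemma pinsker_sq (p q : S → A → ℝ) (s : S) (hp : ∀ a, 0 ≤ p s a) (hq : ∀ a, 0 ≤ q s a)
    (hp1 : ∑ a, p s a = 1) (hq1 : ∑ a, q s a = 1) (h : ∀ a, p s a = 0 → q s a = 0) :
    (∑ a, |q s a - p s a|) ^ 2 ≤ 2 * klState q p s := by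
  have e1 : 2 * klState q p s
      = ∑ a, 2 * (q s a * Real.log (q s a / p s a) - q s a + p s a) := by
    rw [← Finset.mul_sum, Finset.sum_add_distrib, Finset.sum_sub_distrib, hp1, hq1, klState]; ring
  have e2 : ∑ a, (q s a + 2 * p s a) / 3 = 1 := by
    rw [← Finset.sum_div, Finset.sum_add_distrib, ← Finset.mul_sum, hp1, hq1]; norm_num
  have hs := Finset.sum_sq_le_sum_mul_sum_of_sq_le_mul Finset.univ
    (r := fun a => |q s a - p s a|)
    (f := fun a => 2 * (q s a * Real.log (q s a / p s a) - q s a + p s a))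
    (g := fun a => (q s a + 2 * p s a) / 3)
    (fun a _ => mul_nonneg zero_le_two (scalar_kl_nonneg _ _ (hp a) (hq a) (h a)))
    (fun a _ => by have := hp a; have := hq a; positivity)
    (fun a _ => by rw [sq_abs]; exact scalar_pinsker _ _ (hp a) (hq a) (h a))
  rw [e2, mul_one, ← e1] at hs
  exact hs

variable [Fintype S] [DecidableEq S]

lemma pow_nonneg_row (M : Matrix S S ℝ) (h0 : ∀ s s', 0 ≤ M s s') (h1 : ∀ s, ∑ s', M s s' = 1)
    (t : ℕ) : (∀ s s', 0 ≤ (M ^ t) s s') ∧ ∀ s, ∑ s', (M ^ t) s s' = 1 := by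
  induction t with
  | zero =>
    refine ⟨fun s s' => ?_, fun s => ?_⟩
    · rw [pow_zero, Matrix.one_apply]; split_ifs <;> norm_num
    · simp [Matrix.one_apply]
  | succ t ih =>
    refine ⟨fun s s' => ?_, fun s => ?_⟩
    · rw [pow_succ, Matrix.mul_apply]
      exact Finset.sum_nonneg fun j _ => mul_nonneg (ih.1 _ _) (h0 _ _)
    · simp only [pow_succ, Matrix.mul_apply]
      rw [Finset.sum_comm]
      simp only [← Finset.mul_sum, h1, mul_one, ih.2]

lemma pow_le_one_entry (M : Matrix S S ℝ) (h0 : ∀ s s', 0 ≤ M s s')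
    (h1 : ∀ s, ∑ s', M s s' = 1) (t : ℕ) (s s' : S) : (M ^ t) s s' ≤ 1 := by
  obtain ⟨a, b⟩ := pow_nonneg_row M h0 h1 t
  rw [← b s]
  exact Finset.single_le_sum (f := fun s' => (M ^ t) s s') (fun i _ => a s i) (Finset.mem_univ s')

lemma summable_entry (M : Matrix S S ℝ) (h0 : ∀ s s', 0 ≤ M s s')
    (h1 : ∀ s, ∑ s', M s s' = 1) (γ : ℝ) (hγ0 : 0 < γ) (hγ1 : γ < 1) (s s' : S) :
    Summable fun t : ℕ => γ ^ t * (M ^ t) s s' := by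
  refine Summable.of_nonneg_of_le (fun t => mul_nonneg (by positivity)
    ((pow_nonneg_row M h0 h1 t).1 s s')) (fun t => ?_) (summable_geometric_of_lt_one hγ0.le hγ1)
  exact mul_le_of_le_one_right (by positivity) (pow_le_one_entry M h0 h1 t s s')

lemma summable_V (M : Matrix S S ℝ) (h0 : ∀ s s', 0 ≤ M s s')
    (h1 : ∀ s, ∑ s', M s s' = 1) (γ : ℝ) (hγ0 : 0 < γ) (hγ1 : γ < 1) (s : S) (r : S → ℝ) :
    Summable fun t : ℕ => γ ^ t * ∑ s', (M ^ t) s s' * r s' := by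
  have : Summable fun t : ℕ => ∑ s', (γ ^ t * (M ^ t) s s') * r s' :=
    summable_sum fun s' _ => (summable_entry M h0 h1 γ hγ0 hγ1 s s').mul_right _
  refine this.congr fun t => ?_
  rw [Finset.mul_sum]; exact Finset.sum_congr rfl fun _ _ => by ring

lemma summable_d (M : Matrix S S ℝ) (h0 : ∀ s s', 0 ≤ M s s')
    (h1 : ∀ s, ∑ s', M s s' = 1) (γ : ℝ) (hγ0 : 0 < γ) (hγ1 : γ < 1) (s : S) (r : S → ℝ) :
    Summable fun t : ℕ => γ ^ t * ∑ s0, r s0 * (M ^ t) s0 s := by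
  have : Summable fun t : ℕ => ∑ s', (γ ^ t * (M ^ t) s' s) * r s' :=
    summable_sum fun s' _ => (summable_entry M h0 h1 γ hγ0 hγ1 s' s).mul_right _
  refine this.congr fun t => ?_
  rw [Finset.mul_sum]; exact Finset.sum_congr rfl fun _ _ => by ring

lemma tm_nonneg (P : S → A → S → ℝ) (hP0 : ∀ s a s', 0 ≤ P s a s') (p : S → A → ℝ)
    (hp : ∀ s a, 0 ≤ p s a) (s s' : S) : 0 ≤ transMat P p s s' :=
  Finset.sum_nonneg fun a _ => mul_nonneg (hp s a) (hP0 s a s')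

lemma tm_row (P : S → A → S → ℝ) (hP1 : ∀ s a, ∑ s', P s a s' = 1) (p : S → A → ℝ)
    (hp1 : ∀ s, ∑ a, p s a = 1) (s : S) : ∑ s', transMat P p s s' = 1 := by
  simp only [transMat]
  rw [Finset.sum_comm]
  simp only [← Finset.mul_sum, hP1, mul_one, hp1]

lemma V_fix (P : S → A → S → ℝ) (hP0 : ∀ s a s', 0 ≤ P s a s')
    (hP1 : ∀ s a, ∑ s', P s a s' = 1) (γ : ℝ) (hγ0 : 0 < γ) (hγ1 : γ < 1)
    (F p : S → A → ℝ) (hp : ∀ s a, 0 ≤ p s a) (hp1 : ∀ s, ∑ a, p s a = 1) (s : S) :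
    Vfun P γ F p s = ∑ a, p s a * F s a + γ * ∑ s', transMat P p s s' * Vfun P γ F p s' := by
  have h0 := tm_nonneg P hP0 p hp
  have h1 := tm_row P hP1 p hp1
  have hS := fun s => summable_V (transMat P p) h0 h1 γ hγ0 hγ1 s (fun s' => ∑ a, p s' a * F s' a)
  have : ∑ s', transMat P p s s' * Vfun P γ F p s' = ∑' t : ℕ, ∑ s', transMat P p s s' *
      (γ ^ t * ∑ s'', (transMat P p ^ t) s' s'' * ∑ a, p s'' a * F s'' a) := by
    rw [Summable.tsum_finsetSum fun s' _ => (hS s').mul_left _]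
    exact Finset.sum_congr rfl fun s' _ => by rw [tsum_mul_left, Vfun]
  rw [this, Vfun, (hS s).tsum_eq_zero_add, ← tsum_mul_left]
  congr 1
  · simp [Matrix.one_apply]
  · refine tsum_congr fun t => ?_
    have aux : ∀ r : S → ℝ, γ ^ (t + 1) * ∑ s', (transMat P p ^ (t + 1)) s s' * r s' =
        γ * ∑ s', transMat P p s s' * (γ ^ t * ∑ s'', (transMat P p ^ t) s' s'' * r s'') := by
      intro r
      simp only [pow_succ' (transMat P p), Matrix.mul_apply, Finset.sum_mul, Finset.mul_sum]
      rw [Finset.sum_comm]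
      exact Finset.sum_congr rfl fun _ _ => Finset.sum_congr rfl fun _ _ => by ring
    exact aux _

lemma d_fix (P : S → A → S → ℝ) (hP0 : ∀ s a s', 0 ≤ P s a s')
    (hP1 : ∀ s a, ∑ s', P s a s' = 1) (γ : ℝ) (hγ0 : 0 < γ) (hγ1 : γ < 1)
    (ρ0 : S → ℝ)
    (p : S → A → ℝ) (hp : ∀ s a, 0 ≤ p s a) (hp1 : ∀ s, ∑ a, p s a = 1) (s : S) :
    dVisit P γ ρ0 p s = (1 - γ) * ρ0 s + γ * ∑ s', dVisit P γ ρ0 p s' * transMat P p s' s := by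
  have h0 := tm_nonneg P hP0 p hp
  have h1 := tm_row P hP1 p hp1
  have hS := fun s => summable_d (transMat P p) h0 h1 γ hγ0 hγ1 s ρ0
  have : ∑ s', dVisit P γ ρ0 p s' * transMat P p s' s = (1 - γ) * ∑' t : ℕ, ∑ s',
      (γ ^ t * ∑ s0, ρ0 s0 * (transMat P p ^ t) s0 s') * transMat P p s' s := by
    rw [Summable.tsum_finsetSum fun s' _ => (hS s').mul_right _, Finset.mul_sum]
    exact Finset.sum_congr rfl fun s' _ => by rw [tsum_mul_right, dVisit]; ring
  rw [this, dVisit, (hS s).tsum_eq_zero_add, mul_add, mul_left_comm γ, ← tsum_mul_left (a := γ)]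
  congr 1
  · simp [Matrix.one_apply]
  · congr 1
    refine tsum_congr fun t => ?_
    simp only [pow_succ (transMat P p), Matrix.mul_apply, Finset.sum_mul, Finset.mul_sum]
    rw [Finset.sum_comm]
    refine Finset.sum_congr rfl fun _ _ => Finset.sum_congr rfl fun _ _ => by ring

lemma d_nonneg (P : S → A → S → ℝ) (hP0 : ∀ s a s', 0 ≤ P s a s')
    (hP1 : ∀ s a, ∑ s', P s a s' = 1) (γ : ℝ) (hγ0 : 0 < γ) (hγ1 : γ < 1)
    (ρ0 : S → ℝ) (hρ0 : ∀ s, 0 ≤ ρ0 s)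
    (p : S → A → ℝ) (hp : ∀ s a, 0 ≤ p s a) (hp1 : ∀ s, ∑ a, p s a = 1) (s : S) :
    0 ≤ dVisit P γ ρ0 p s := by
  have h0 := tm_nonneg P hP0 p hp
  have h1 := tm_row P hP1 p hp1
  refine mul_nonneg (by linarith) (tsum_nonneg fun t => mul_nonneg (by positivity) ?_)
  exact Finset.sum_nonneg fun s0 _ => mul_nonneg (hρ0 s0) ((pow_nonneg_row _ h0 h1 t).1 _ _)

/-- Testing the fixed point equation against a function. -/
lemma d_test (P : S → A → S → ℝ) (hP0 : ∀ s a s', 0 ≤ P s a s')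
    (hP1 : ∀ s a, ∑ s', P s a s' = 1) (γ : ℝ) (hγ0 : 0 < γ) (hγ1 : γ < 1)
    (ρ0 : S → ℝ)
    (p : S → A → ℝ) (hp : ∀ s a, 0 ≤ p s a) (hp1 : ∀ s, ∑ a, p s a = 1) (f : S → ℝ) :
    (1 - γ) * ∑ s, ρ0 s * f s =
      ∑ s, dVisit P γ ρ0 p s * (f s - γ * ∑ s', transMat P p s s' * f s') := by
  have e : ∑ s, dVisit P γ ρ0 p s * f s = (1 - γ) * ∑ s, ρ0 s * f s +
      ∑ s, dVisit P γ ρ0 p s * (γ * ∑ s', transMat P p s s' * f s') := by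
    calc ∑ s, dVisit P γ ρ0 p s * f s
        = ∑ s, ((1 - γ) * ρ0 s + γ * ∑ s', dVisit P γ ρ0 p s' * transMat P p s' s) * f s :=
          Finset.sum_congr rfl fun s _ => by
            rw [← d_fix P hP0 hP1 γ hγ0 hγ1 ρ0 p hp hp1 s]
      _ = _ := by
        simp only [add_mul, Finset.sum_add_distrib, Finset.mul_sum, Finset.sum_mul]
        congr 1
        · exact Finset.sum_congr rfl fun _ _ => by ring
        · rw [Finset.sum_comm]
          exact Finset.sum_congr rfl fun _ _ => Finset.sum_congr rfl fun _ _ => by ring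
  simp only [mul_sub, Finset.sum_sub_distrib]
  linarith

lemma d_sum (P : S → A → S → ℝ) (hP0 : ∀ s a s', 0 ≤ P s a s')
    (hP1 : ∀ s a, ∑ s', P s a s' = 1) (γ : ℝ) (hγ0 : 0 < γ) (hγ1 : γ < 1)
    (ρ0 : S → ℝ) (hρ1 : ∑ s, ρ0 s = 1)
    (p : S → A → ℝ) (hp : ∀ s a, 0 ≤ p s a) (hp1 : ∀ s, ∑ a, p s a = 1) :
    ∑ s, dVisit P γ ρ0 p s = 1 := by
  have h := d_test P hP0 hP1 γ hγ0 hγ1 ρ0 p hp hp1 (fun _ => 1)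
  simp only [mul_one, hρ1, tm_row P hP1 p hp1, ← Finset.sum_mul] at h
  have : (1 - γ) ≠ 0 := by linarith
  exact mul_right_cancel₀ this (by linarith)

lemma perf_diff (P : S → A → S → ℝ) (hP0 : ∀ s a s', 0 ≤ P s a s')
    (hP1 : ∀ s a, ∑ s', P s a s' = 1) (γ : ℝ) (hγ0 : 0 < γ) (hγ1 : γ < 1)
    (ρ0 : S → ℝ)
    (F p q : S → A → ℝ) (hp : ∀ s a, 0 ≤ p s a) (hp1 : ∀ s, ∑ a, p s a = 1)
    (hq : ∀ s a, 0 ≤ q s a) (hq1 : ∀ s, ∑ a, q s a = 1) :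
    (1 - γ) * (Jret P γ ρ0 F q - Jret P γ ρ0 F p) =
      ∑ s, dVisit P γ ρ0 q s * ∑ a, q s a * Adv P γ F p s a := by
  rw [mul_sub, Jret, Jret, d_test P hP0 hP1 γ hγ0 hγ1 ρ0 q hq hq1 (Vfun P γ F q),
    d_test P hP0 hP1 γ hγ0 hγ1 ρ0 q hq hq1 (Vfun P γ F p), ← Finset.sum_sub_distrib]
  refine Finset.sum_congr rfl fun s _ => ?_
  have e := V_fix P hP0 hP1 γ hγ0 hγ1 F q hq hq1 s
  have e2 : ∑ a, q s a * Adv P γ F p s a = ∑ a, q s a * F s a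
      + γ * ∑ s', transMat P q s s' * Vfun P γ F p s' - Vfun P γ F p s := by
    simp only [Adv, Qfun, mul_sub, mul_add, Finset.sum_sub_distrib, Finset.sum_add_distrib,
      ← Finset.sum_mul, hq1, one_mul]
    congr 2
    simp only [transMat, Finset.mul_sum, Finset.sum_mul]
    rw [Finset.sum_comm]
    exact Finset.sum_congr rfl fun _ _ => Finset.sum_congr rfl fun _ _ => by ring
  rw [← mul_sub]
  congr 1
  linarith

lemma d_l1 (P : S → A → S → ℝ) (hP0 : ∀ s a s', 0 ≤ P s a s')
    (hP1 : ∀ s a, ∑ s', P s a s' = 1) (γ : ℝ) (hγ0 : 0 < γ) (hγ1 : γ < 1)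
    (ρ0 : S → ℝ) (hρ0 : ∀ s, 0 ≤ ρ0 s)
    (p q : S → A → ℝ) (hp : ∀ s a, 0 ≤ p s a) (hp1 : ∀ s, ∑ a, p s a = 1)
    (hq : ∀ s a, 0 ≤ q s a) (hq1 : ∀ s, ∑ a, q s a = 1) :
    (1 - γ) * ∑ s, |dVisit P γ ρ0 q s - dVisit P γ ρ0 p s| ≤
      γ * ∑ s, dVisit P γ ρ0 p s * ∑ a, |q s a - p s a| := by
  have key : ∀ s, |dVisit P γ ρ0 q s - dVisit P γ ρ0 p s| ≤
      γ * ∑ s', |dVisit P γ ρ0 q s' - dVisit P γ ρ0 p s'| * transMat P q s' s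
      + γ * ∑ s', dVisit P γ ρ0 p s' * ∑ a, |q s' a - p s' a| * P s' a s := by
    intro s
    have e : dVisit P γ ρ0 q s - dVisit P γ ρ0 p s =
        γ * ∑ s', (dVisit P γ ρ0 q s' - dVisit P γ ρ0 p s') * transMat P q s' s
      + γ * ∑ s', dVisit P γ ρ0 p s' * ∑ a, (q s' a - p s' a) * P s' a s := by
      have e1 := d_fix P hP0 hP1 γ hγ0 hγ1 ρ0 p hp hp1 s
      have e2 := d_fix P hP0 hP1 γ hγ0 hγ1 ρ0 q hq hq1 s
      have e3 : ∀ s', ∑ a, (q s' a - p s' a) * P s' a s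
          = transMat P q s' s - transMat P p s' s := fun s' => by
        simp only [transMat, sub_mul, Finset.sum_sub_distrib]
      simp only [e3]
      simp only [sub_mul, mul_sub, Finset.sum_sub_distrib]
      linarith
    rw [e]
    refine (abs_add_le _ _).trans (add_le_add ?_ ?_)
    · rw [abs_mul, abs_of_pos hγ0]
      refine mul_le_mul_of_nonneg_left ((Finset.abs_sum_le_sum_abs _ _).trans
        (Finset.sum_le_sum fun s' _ => ?_)) hγ0.le
      rw [abs_mul, abs_of_nonneg (tm_nonneg P hP0 q hq s' s)]
    · rw [abs_mul, abs_of_pos hγ0]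
      refine mul_le_mul_of_nonneg_left ((Finset.abs_sum_le_sum_abs _ _).trans
        (Finset.sum_le_sum fun s' _ => ?_)) hγ0.le
      rw [abs_mul, abs_of_nonneg (d_nonneg P hP0 hP1 γ hγ0 hγ1 ρ0 hρ0 p hp hp1 s')]
      refine mul_le_mul_of_nonneg_left ((Finset.abs_sum_le_sum_abs _ _).trans
        (Finset.sum_le_sum fun a _ => ?_)) (d_nonneg P hP0 hP1 γ hγ0 hγ1 ρ0 hρ0 p hp hp1 s')
      rw [abs_mul, abs_of_nonneg (hP0 s' a s)]
  have h := Finset.sum_le_sum fun s (_ : s ∈ Finset.univ) => key s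
  rw [Finset.sum_add_distrib, ← Finset.mul_sum, ← Finset.mul_sum, Finset.sum_comm,
    Finset.sum_comm (f := fun s s' => dVisit P γ ρ0 p s' * ∑ a, |q s' a - p s' a| * P s' a s)] at h
  have e4 : ∀ s', ∑ s, ∑ a, |q s' a - p s' a| * P s' a s = ∑ a, |q s' a - p s' a| := fun s' => by
    rw [Finset.sum_comm]; simp only [← Finset.mul_sum, hP1, mul_one]
  simp only [← Finset.mul_sum, tm_row P hP1 q hq1, mul_one, e4] at h
  linarith

lemma avg_pinsker (P : S → A → S → ℝ) (hP0 : ∀ s a s', 0 ≤ P s a s')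
    (hP1 : ∀ s a, ∑ s', P s a s' = 1) (γ : ℝ) (hγ0 : 0 < γ) (hγ1 : γ < 1)
    (ρ0 : S → ℝ) (hρ0 : ∀ s, 0 ≤ ρ0 s) (hρ1 : ∑ s, ρ0 s = 1)
    (p q : S → A → ℝ) (hp : ∀ s a, 0 ≤ p s a) (hp1 : ∀ s, ∑ a, p s a = 1)
    (hq : ∀ s a, 0 ≤ q s a) (hq1 : ∀ s, ∑ a, q s a = 1)
    (habs : ∀ s a, p s a = 0 → q s a = 0) (δ : ℝ) (hKL : avgKL P γ ρ0 q p ≤ δ) :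
    ∑ s, dVisit P γ ρ0 p s * ∑ a, |q s a - p s a| ≤ Real.sqrt (2 * δ) := by
  have hd := d_nonneg P hP0 hP1 γ hγ0 hγ1 ρ0 hρ0 p hp hp1
  have hs := Finset.sum_sq_le_sum_mul_sum_of_sq_le_mul Finset.univ
    (r := fun s => dVisit P γ ρ0 p s * ∑ a, |q s a - p s a|)
    (f := fun s => dVisit P γ ρ0 p s)
    (g := fun s => 2 * (dVisit P γ ρ0 p s * klState q p s))
    (fun s _ => hd s)
    (fun s _ => mul_nonneg zero_le_two (mul_nonneg (hd s)
      (kl_nonneg' p q s (hp s) (hq s) (hp1 s) (hq1 s) (habs s))))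
    (fun s _ => by
      have := pinsker_sq p q s (hp s) (hq s) (hp1 s) (hq1 s) (habs s)
      have := mul_le_mul_of_nonneg_left this (sq_nonneg (dVisit P γ ρ0 p s))
      rw [mul_pow]
      linarith)
  rw [d_sum P hP0 hP1 γ hγ0 hγ1 ρ0 hρ1 p hp hp1, one_mul, ← Finset.mul_sum] at hs
  exact Real.le_sqrt_of_sq_le (hs.trans (by unfold avgKL at hKL; linarith))

lemma step_bound (P : S → A → S → ℝ) (hP0 : ∀ s a s', 0 ≤ P s a s')
    (hP1 : ∀ s a, ∑ s', P s a s' = 1) (γ : ℝ) (hγ0 : 0 < γ) (hγ1 : γ < 1)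
    (ρ0 : S → ℝ) (hρ0 : ∀ s, 0 ≤ ρ0 s) (hρ1 : ∑ s, ρ0 s = 1)
    [Nonempty S] (F p q : S → A → ℝ) (hp : ∀ s a, 0 ≤ p s a)
    (hp1 : ∀ s, ∑ a, p s a = 1)
    (hq : ∀ s a, 0 ≤ q s a) (hq1 : ∀ s, ∑ a, q s a = 1)
    (habs : ∀ s a, p s a = 0 → q s a = 0) (δ : ℝ) (hKL : avgKL P γ ρ0 q p ≤ δ)
    (ε : ℝ) (hε0 : 0 ≤ ε) (hε : epsAdv P γ F p q ≤ ε) :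
    Jret P γ ρ0 F q ≤ Jret P γ ρ0 F p + (1 / (1 - γ)) * surrAdv P γ ρ0 F p q
      + Real.sqrt (2 * δ) * γ / (1 - γ) ^ 2 * ε := by
  have h1 := perf_diff P hP0 hP1 γ hγ0 hγ1 ρ0 F p q hp hp1 hq hq1
  have h2 := d_l1 P hP0 hP1 γ hγ0 hγ1 ρ0 hρ0 p q hp hp1 hq hq1
  have h3 := avg_pinsker P hP0 hP1 γ hγ0 hγ1 ρ0 hρ0 hρ1 p q hp hp1 hq hq1 habs δ hKL
  have hg : ∀ s, |∑ a, q s a * Adv P γ F p s a| ≤ ε := fun s =>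
    (Finset.le_sup' (fun s => |∑ a, q s a * Adv P γ F p s a|) (Finset.mem_univ s)).trans hε
  have h4 : ∑ s, dVisit P γ ρ0 q s * ∑ a, q s a * Adv P γ F p s a - surrAdv P γ ρ0 F p q
      ≤ (∑ s, |dVisit P γ ρ0 q s - dVisit P γ ρ0 p s|) * ε := by
    rw [surrAdv, ← Finset.sum_sub_distrib, Finset.sum_mul]
    refine Finset.sum_le_sum fun s _ => ?_
    rw [← sub_mul]
    refine (le_abs_self _).trans ?_
    rw [abs_mul]
    exact mul_le_mul_of_nonneg_left (hg s) (abs_nonneg _)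
  have hpos : 0 < 1 - γ := by linarith
  have h5 : ∑ s, |dVisit P γ ρ0 q s - dVisit P γ ρ0 p s| ≤ Real.sqrt (2 * δ) * γ / (1 - γ) := by
    rw [le_div_iff₀ hpos]
    nlinarith [mul_le_mul_of_nonneg_left h3 hγ0.le]
  have h6 := mul_le_mul_of_nonneg_right h5 hε0
  have h7 : (1 - γ) * (Jret P γ ρ0 F q - Jret P γ ρ0 F p) ≤
      surrAdv P γ ρ0 F p q + Real.sqrt (2 * δ) * γ / (1 - γ) * ε := by linarith
  have h8 : Jret P γ ρ0 F q - Jret P γ ρ0 F p ≤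
      (surrAdv P γ ρ0 F p q + Real.sqrt (2 * δ) * γ / (1 - γ) * ε) / (1 - γ) := by
    rw [le_div_iff₀ hpos]; linarith
  have e : (surrAdv P γ ρ0 F p q + Real.sqrt (2 * δ) * γ / (1 - γ) * ε) / (1 - γ)
      = (1 / (1 - γ)) * surrAdv P γ ρ0 F p q + Real.sqrt (2 * δ) * γ / (1 - γ) ^ 2 * ε := by
    field_simp
  linarith
end

/-- adversarial update cost-budget bound (Theorem 4.2, cost part). -/
theorem adversarial_cost_budget_bound {S A : Type*} [Fintype S] [DecidableEq S] [Fintype A] [Nonempty S] [Nonempty A]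
    (P : S → A → S → ℝ) (hP0 : ∀ s a s', 0 ≤ P s a s') (hP1 : ∀ s a, ∑ s', P s a s' = 1)
    (γ : ℝ) (hγ0 : 0 < γ) (hγ1 : γ < 1)
    (ρ0 : S → ℝ) (hρ0 : ∀ s, 0 ≤ ρ0 s) (hρ1 : ∑ s, ρ0 s = 1)
    (δ : ℝ) (hδ : 0 < δ) (εC : ℝ) (hεC : 0 ≤ εC) (d : ℝ) (C : S → A → ℝ)
    (n1 n2 : ℕ) (hn1 : 1 ≤ n1) (σ pol : ℕ → S → A → ℝ)
    (hσ0 : ∀ i ≤ n1, ∀ s a, 0 ≤ σ i s a)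
    (hσ1 : ∀ i ≤ n1, ∀ s, ∑ a, σ i s a = 1)
    (hσabs : ∀ i < n1, ∀ s a, σ i s a = 0 → σ (i + 1) s a = 0)
    (hσKL : ∀ i < n1, avgKL P γ ρ0 (σ (i + 1)) (σ i) ≤ δ)
    (hσsurr : ∀ i < n1,
      Jret P γ ρ0 C (σ i) + (1 / (1 - γ)) * surrAdv P γ ρ0 C (σ i) (σ (i + 1)) ≤ d)
    (hσeps : ∀ i < n1, epsAdv P γ C (σ i) (σ (i + 1)) ≤ εC)
    (hlink : pol 0 = σ n1)
    (hpol0 : ∀ i ≤ n2, ∀ s a, 0 ≤ pol i s a)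
    (hpol1 : ∀ i ≤ n2, ∀ s, ∑ a, pol i s a = 1)
    (hpabs : ∀ i < n2, ∀ s a, pol i s a = 0 → pol (i + 1) s a = 0)
    (hpKL : ∀ i < n2, avgKL P γ ρ0 (pol (i + 1)) (pol i) ≤ δ)
    (hpA : ∀ i < n2, surrAdv P γ ρ0 C (pol i) (pol (i + 1)) ≤ 0)
    (hpeps : ∀ i < n2, epsAdv P γ C (pol i) (pol (i + 1)) ≤ εC) :
    Jret P γ ρ0 C (pol n2) - d ≤
      (Real.sqrt (2 * δ) * γ / (1 - γ) ^ 2) * ((n1 : ℝ) + (n2 : ℝ)) * εC := by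

  set B := Real.sqrt (2 * δ) * γ / (1 - γ) ^ 2 * εC with hB
  have hpos : 0 < 1 - γ := by linarith
  have hB0 : 0 ≤ B := by positivity
  have hmain : ∀ k, k ≤ n2 → Jret P γ ρ0 C (pol k) ≤ d + (1 + (k : ℝ)) * B := by
    intro k
    induction k with
    | zero =>
      intro _
      obtain ⟨m, rfl⟩ : ∃ m, n1 = m + 1 := ⟨n1 - 1, by omega⟩
      have h := step_bound P hP0 hP1 γ hγ0 hγ1 ρ0 hρ0 hρ1 C (σ m) (σ (m + 1))
        (hσ0 m (by omega)) (hσ1 m (by omega)) (hσ0 _ le_rfl) (hσ1 _ le_rfl)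
        (hσabs m (by omega)) δ (hσKL m (by omega)) εC hεC (hσeps m (by omega))
      have h2 := hσsurr m (by omega)
      rw [hlink]
      push_cast
      linarith
    | succ k ih =>
      intro hk
      have h := step_bound P hP0 hP1 γ hγ0 hγ1 ρ0 hρ0 hρ1 C (pol k) (pol (k + 1))
        (hpol0 k (by omega)) (hpol1 k (by omega)) (hpol0 _ hk) (hpol1 _ hk)
        (hpabs k (by omega)) δ (hpKL k (by omega)) εC hεC (hpeps k (by omega))
      have h2 := hpA k (by omega)
      have h3 : (1 / (1 - γ)) * surrAdv P γ ρ0 C (pol k) (pol (k + 1)) ≤ 0 :=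
        mul_nonpos_of_nonneg_of_nonpos (by positivity) h2
      have h4 := ih (by omega)
      push_cast
      linarith
  have h := hmain n2 le_rfl
  have hn : (1 : ℝ) ≤ n1 := by exact_mod_cast hn1
  have e : (Real.sqrt (2 * δ) * γ / (1 - γ) ^ 2) * ((n1 : ℝ) + (n2 : ℝ)) * εC
      = ((n1 : ℝ) + n2) * B := by rw [hB]; ring
  rw [e]
  nlinarith [mul_le_mul_of_nonneg_right hn hB0]
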